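/- There exists a 1-periodic, even, real-valued C^∞ function p: ℝ → ℝ such that p(x)² + p(x+1/2)² = 2 for all x, p vanishes together with all its derivatives on [1/7, 3/14] ∪ [3/7, 1/2], and p(0) = √2. -/

import Mathlib

noncomputable def hq (c : ℝ) : ℝ :=
  - Real.smoothTransition (10 * c) + 2 * Real.smoothTransition (10 * (c - 71/100))

noncomputable def hP (c : ℝ) : ℝ :=
  Real.sqrt 2 * Real.sin (Real.pi / 2 * ((1 + hq c - hq (-c)) / 2))

lemma hq_contDiff : ContDiff ℝ (⊤ : ℕ∞) hq := by
  have hs : ContDiff ℝ (⊤ : ℕ∞) Real.smoothTransition := Real.smoothTransition.contDiff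
  unfold hq
  fun_prop

lemma hP_contDiff : ContDiff ℝ (⊤ : ℕ∞) hP := by
  have hs := hq_contDiff
  have := Real.contDiff_sin (n := ((⊤ : ℕ∞) : WithTop ℕ∞))
  unfold hP
  fun_prop

lemma hq_neg {c : ℝ} (h : c ≤ 0) : hq c = 0 := by
  unfold hq
  rw [Real.smoothTransition.zero_of_nonpos (by linarith),
    Real.smoothTransition.zero_of_nonpos (by linarith)]
  norm_num

lemma hq_mid {c : ℝ} (h : 1/10 ≤ c) (h' : c ≤ 71/100) : hq c = -1 := by
  unfold hq
  rw [Real.smoothTransition.one_of_one_le (by linarith),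
    Real.smoothTransition.zero_of_nonpos (by linarith)]
  norm_num

lemma hq_big {c : ℝ} (h : 81/100 ≤ c) : hq c = 1 := by
  unfold hq
  rw [Real.smoothTransition.one_of_one_le (by linarith),
    Real.smoothTransition.one_of_one_le (by linarith)]
  norm_num

lemma hP_sq (c : ℝ) : hP c ^ 2 + hP (-c) ^ 2 = 2 := by
  unfold hP
  have e : Real.pi / 2 * ((1 + hq (-c) - hq (- -c)) / 2)
      = Real.pi / 2 - Real.pi / 2 * ((1 + hq c - hq (-c)) / 2) := by
    rw [neg_neg]; ring
  rw [e, Real.sin_pi_div_two_sub, mul_pow, mul_pow, Real.sq_sqrt (by norm_num), ← mul_add,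
    Real.sin_sq_add_cos_sq]
  norm_num

lemma hP_zero {c : ℝ} (h : c ∈ Set.Ioo (1/10 : ℝ) (71/100) ∪ Set.Iio (-(81/100) : ℝ)) :
    hP c = 0 := by
  unfold hP
  rcases h with ⟨h1, h2⟩ | h
  · rw [hq_mid h1.le h2.le, hq_neg (by linarith)]; norm_num
  · have h : c < -(81/100) := h
    rw [hq_neg (by linarith : c ≤ 0), hq_big (by linarith)]; norm_num

lemma hcos_mem {x : ℝ} (hx : x ∈ Set.Icc (1/7 : ℝ) (3/14) ∪ Set.Icc (3/7 : ℝ) (1/2)) :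
    Real.cos (2 * Real.pi * x) ∈
      Set.Ioo (1/10 : ℝ) (71/100) ∪ Set.Iio (-(81/100) : ℝ) := by
  have hpi := Real.pi_pos
  rcases hx with ⟨h1, h2⟩ | ⟨h1, h2⟩
  · left
    constructor
    · have := Real.one_sub_mul_le_cos (x := 2 * Real.pi * x) (by nlinarith) (by nlinarith)
      have e : 2 / Real.pi * (2 * Real.pi * x) = 4 * x := by field_simp; ring
      rw [e] at this
      linarith
    · have := Real.cos_le_cos_of_nonneg_of_le_pi (x := Real.pi / 4) (y := 2 * Real.pi * x)
        (by positivity) (by nlinarith) (by nlinarith)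
      rw [Real.cos_pi_div_four] at this
      have h : Real.sqrt 2 < 142/100 := by
        rw [Real.sqrt_lt' (by norm_num)]; norm_num
      linarith
  · right
    have := Real.cos_le_cos_of_nonneg_of_le_pi (x := Real.pi - Real.pi / 6)
      (y := 2 * Real.pi * x) (by linarith) (by nlinarith) (by nlinarith)
    rw [Real.cos_pi_sub, Real.cos_pi_div_six] at this
    have h : 164/100 < Real.sqrt 3 := by
      rw [Real.lt_sqrt (by norm_num)]; norm_num
    show Real.cos (2 * Real.pi * x) < -(81/100)
    linarith

/-- There exists a 1-periodic, even, real-valued `C^∞` function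
`p : ℝ → ℝ` with `p(x)² + p(x+1/2)² = 2` for all `x`, vanishing together with
all its derivatives on `[1/7, 3/14] ∪ [3/7, 1/2]`, and with `p 0 = √2`. -/
theorem stmt6 :
    ∃ p : ℝ → ℝ,
      ContDiff ℝ (⊤ : ℕ∞) p ∧
      (∀ x, p (x + 1) = p x) ∧
      (∀ x, p (-x) = p x) ∧
      (∀ x, p x ^ 2 + p (x + 1/2) ^ 2 = 2) ∧
      (∀ (n : ℕ), ∀ x ∈ Set.Icc (1/7 : ℝ) (3/14) ∪ Set.Icc (3/7 : ℝ) (1/2),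
        iteratedDeriv n p x = 0) ∧
      p 0 = Real.sqrt 2 := by
  refine ⟨fun x => hP (Real.cos (2 * Real.pi * x)), ?_, ?_, ?_, ?_, ?_, ?_⟩
  · have h := Real.contDiff_cos (n := ((⊤ : ℕ∞) : WithTop ℕ∞))
    have h2 := hP_contDiff
    fun_prop
  · intro x
    simp only [mul_add, mul_one, Real.cos_add_two_pi]
  · intro x
    simp only [mul_neg, Real.cos_neg]
  · intro x
    have e : 2 * Real.pi * (x + 1/2) = 2 * Real.pi * x + Real.pi := by ring
    simp only [e, Real.cos_add_pi]
    exact hP_sq _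
  · intro n x hx
    have hev : (fun x => hP (Real.cos (2 * Real.pi * x))) =ᶠ[nhds x] fun _ => (0 : ℝ) := by
      have hc : Continuous fun x : ℝ => Real.cos (2 * Real.pi * x) := by fun_prop
      have ho := ((isOpen_Ioo (a := (1/10 : ℝ)) (b := 71/100)).union
        (isOpen_Iio (a := (-(81/100) : ℝ)))).preimage hc
      filter_upwards [ho.mem_nhds (hcos_mem hx)] with y hy
      exact hP_zero hy
    rw [hev.iteratedDeriv_eq n]
    simp
  · simp only [mul_zero, Real.cos_zero]
    unfold hP
    rw [hq_big (by norm_num), hq_neg (by norm_num)]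
    norm_num
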